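/- arXiv:2410.01587 — 3 statements merged into one kernel-verified Lean document; each statement's English description precedes it below -/
import Mathlib

section
/- An element A ∈ SL(n,ℍ) is reversible in SL(n,ℍ) if and only if A can be written as a product A = g₁g₂ of two skew-involutions g₁, g₂ ∈ SL(n,ℍ), i.e. g₁² = g₂² = −Iₙ. -/
set_option maxHeartbeats 1000000

noncomputable section

open Matrix

/-- The embedding of `ℂ` into the real quaternions, onto the subalgebra spanned by `1` and `i`. -/
def C2H (z : ℂ) : Quaternion ℝ := ⟨z.re, z.im, 0, 0⟩

/-- For a quaternion `q = a + b i + c j + d k`, its first complex coordinate `a + b i`. -/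
def qc1 (q : Quaternion ℝ) : ℂ := ⟨q.re, q.imI⟩

/-- For a quaternion `q = a + b i + c j + d k`, its second complex coordinate `c + d i`,
so that `q = qc1 q + (qc2 q) * j`. -/
def qc2 (q : Quaternion ℝ) : ℂ := ⟨q.imJ, q.imK⟩

/-- The embedding `Φ` of quaternionic square matrices into complex matrices of doubled size:
writing `A = A₁ + A₂ · j`, `Φ A` is the block matrix `[[A₁, A₂], [-conj A₂, conj A₁]]`. -/
def Phi {m : Type*} (A : Matrix m m (Quaternion ℝ)) : Matrix (m ⊕ m) (m ⊕ m) ℂ :=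
  Matrix.fromBlocks (A.map qc1) (A.map qc2)
    (-(A.map fun q => (starRingEnd ℂ) (qc2 q))) (A.map fun q => (starRingEnd ℂ) (qc1 q))

/-- The determinant of a quaternionic matrix `A`: the determinant of `Φ A`.
`A ∈ GL(n, ℍ)` means `qdet A ≠ 0`, and `A ∈ SL(n, ℍ)` means `qdet A = 1`. -/
def qdet {m : Type*} [Fintype m] [DecidableEq m] (A : Matrix m m (Quaternion ℝ)) : ℂ :=
  (Phi A).det

/-- The `m × m` Jordan block `J(λ, m)` over `ℂ`: `λ` on the diagonal, `1` on the
superdiagonal, `0` elsewhere. -/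
def jordanC (lam : ℂ) (m : ℕ) : Matrix (Fin m) (Fin m) ℂ :=
  Matrix.of fun i j => if (j : ℕ) = (i : ℕ) then lam else if (j : ℕ) = (i : ℕ) + 1 then 1 else 0

/-- The `m × m` Jordan block `J(λ, m)`, `λ ∈ ℂ`, viewed as a quaternionic matrix. -/
def jordanH (lam : ℂ) (m : ℕ) : Matrix (Fin m) (Fin m) (Quaternion ℝ) :=
  (jordanC lam m).map C2H


theorem qc1_mul (p q : Quaternion ℝ) :
    qc1 (p * q) = qc1 p * qc1 q + qc2 p * (-(starRingEnd ℂ) (qc2 q)) := by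
  apply Complex.ext <;> simp [qc1, qc2] <;> ring

theorem qc2_mul (p q : Quaternion ℝ) :
    qc2 (p * q) = qc1 p * qc2 q + qc2 p * (starRingEnd ℂ) (qc1 q) := by
  apply Complex.ext <;> simp [qc1, qc2] <;> ring

theorem qc1_sum {ι : Type*} (s : Finset ι) (f : ι → Quaternion ℝ) :
    qc1 (∑ i ∈ s, f i) = ∑ i ∈ s, qc1 (f i) := by
  let F : Quaternion ℝ →+ ℂ :=
    { toFun := qc1, map_zero' := by apply Complex.ext <;> rfl,
      map_add' := fun a b => by apply Complex.ext <;> simp [qc1] }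
  exact map_sum F f s

theorem qc2_sum {ι : Type*} (s : Finset ι) (f : ι → Quaternion ℝ) :
    qc2 (∑ i ∈ s, f i) = ∑ i ∈ s, qc2 (f i) := by
  let F : Quaternion ℝ →+ ℂ :=
    { toFun := qc2, map_zero' := by apply Complex.ext <;> rfl,
      map_add' := fun a b => by apply Complex.ext <;> simp [qc2] }
  exact map_sum F f s

section detpart
set_option linter.unusedSectionVars false
variable {m : Type*} [Fintype m] [DecidableEq m]

theorem Phi_mul (A B : Matrix m m (Quaternion ℝ)) : Phi (A * B) = Phi A * Phi B := by
  unfold Phi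
  rw [Matrix.fromBlocks_multiply]
  congr 1 <;> ext i j <;>
    simp only [Matrix.map_apply, Matrix.mul_apply, Matrix.add_apply, Matrix.neg_apply, qc1_sum,
      qc2_sum, qc1_mul, qc2_mul, map_sum, map_add, map_mul, map_neg, Complex.conj_conj,
      ← Finset.sum_add_distrib, ← Finset.sum_neg_distrib] <;>
    refine Finset.sum_congr rfl fun x _ => ?_ <;> ring

theorem Phi_add (A B : Matrix m m (Quaternion ℝ)) : Phi (A + B) = Phi A + Phi B := by
  unfold Phi
  rw [Matrix.fromBlocks_add]
  congr 1 <;> ext i j <;> apply Complex.ext <;> simp [qc1, qc2] <;> ring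

theorem Phi_one : Phi (1 : Matrix m m (Quaternion ℝ)) = 1 := by
  unfold Phi
  rw [← Matrix.fromBlocks_one]
  congr 1 <;> ext i j <;> by_cases h : i = j <;> apply Complex.ext <;>
    simp [qc1, qc2, Matrix.one_apply, h] <;> rfl

theorem Phi_neg_one : Phi (-1 : Matrix m m (Quaternion ℝ)) = -1 := by
  have h := Phi_add (1 : Matrix m m (Quaternion ℝ)) (-1)
  have h0 : Phi (0 : Matrix m m (Quaternion ℝ)) = 0 := by
    have := Phi_add (0 : Matrix m m (Quaternion ℝ)) 0
    simpa using this
  rw [add_neg_cancel, h0, Phi_one] at h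
  exact eq_neg_of_add_eq_zero_right h.symm

theorem qdet_real (A : Matrix m m (Quaternion ℝ)) : (starRingEnd ℂ) (qdet A) = qdet A := by
  let J : Matrix (m ⊕ m) (m ⊕ m) ℂ := Matrix.fromBlocks 0 1 (-1) 0
  have hJ : J * J = -1 := by
    simp only [J, Matrix.fromBlocks_multiply]
    rw [← Matrix.fromBlocks_one, Matrix.fromBlocks_neg]
    simp
  have hd : J.det ≠ 0 := by
    intro h
    have := congrArg Matrix.det hJ
    rw [Matrix.det_mul, h, Matrix.det_neg] at this
    simp at this
  have hc : J * Phi A = (Phi A).map (starRingEnd ℂ) * J := by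
    simp only [J, Phi, Matrix.fromBlocks_map, Matrix.fromBlocks_multiply]
    congr 1 <;> ext i j <;> simp
  have h2 := congrArg Matrix.det hc
  rw [Matrix.det_mul, Matrix.det_mul, mul_comm] at h2
  have h3 := mul_right_cancel₀ hd h2
  have h4 := RingHom.map_det (starRingEnd ℂ) (Phi A)
  unfold qdet
  rw [h4]
  exact h3.symm

theorem qdet_skew (h : Matrix m m (Quaternion ℝ)) (hh : h * h = -1) : qdet h = 1 := by
  have hM : Phi h * Phi h = -1 := by rw [← Phi_mul, hh, Phi_neg_one]
  have h1 : (1 + Phi h) * (1 + Phi h) = (2 : ℂ) • Phi h := by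
    rw [two_smul, mul_add, add_mul, add_mul, hM]; simp only [one_mul, mul_one]; abel
  have hsq : qdet h * qdet h = 1 := by
    unfold qdet
    rw [← Matrix.det_mul, hM, Matrix.det_neg]
    simp
  have h2 : qdet (1 + h) * qdet (1 + h) = 2 ^ (Fintype.card (m ⊕ m)) * qdet h := by
    unfold qdet
    rw [← Matrix.det_mul, Phi_add, Phi_one, h1, Matrix.det_smul]
  obtain ⟨r, hr⟩ := Complex.conj_eq_iff_real.1 (qdet_real h)
  obtain ⟨s, hs⟩ := Complex.conj_eq_iff_real.1 (qdet_real (1 + h))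
  rw [hr] at hsq h2 ⊢
  rw [hs] at h2
  norm_cast at hsq h2 ⊢
  have hp : (0 : ℝ) < ((2 ^ (Fintype.card (m ⊕ m)) : ℕ) : ℝ) := by positivity
  rcases mul_self_eq_one_iff.1 hsq with h | h
  · exact h
  · subst h
    nlinarith [mul_self_nonneg s]

end detpart

section commpart
open Polynomial
variable {S : Type*} [CommRing S] [Algebra ℝ S]

theorem newton_sqrt (x y : S) (hx : IsUnit x) (h : IsNilpotent (x * x - y)) :
    ∃ d : S, d * d = y ∧ IsNilpotent (x - d) := by
  have h2 : IsUnit (2 : S) := by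
    have := (isUnit_iff_ne_zero.2 (two_ne_zero : (2 : ℝ) ≠ 0)).map (algebraMap ℝ S)
    rwa [map_ofNat] at this
  have key := Polynomial.existsUnique_nilpotent_sub_and_aeval_eq_zero
    (P := (X ^ 2 - C y : S[X])) (x := x) (by simpa [pow_two] using h)
    (by simpa [Polynomial.derivative_X_pow, one_add_one_eq_two] using h2.mul hx)
  obtain ⟨r, ⟨hr1, hr2⟩, -⟩ := key
  refine ⟨r, ?_, hr1⟩
  simp only [map_sub, map_pow, aeval_X, aeval_C, Algebra.algebraMap_self, RingHom.id_apply] at hr2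
  linear_combination hr2

theorem comm_L1 [Module.Finite ℝ S] (hS : ∀ u : S, IsNilpotent u ∨ IsUnit u) (x : S) :
    (∃ μ : ℝ, IsNilpotent (x - algebraMap ℝ S μ)) ∨
    ∃ (I : S) (a b : ℝ), I * I = -1 ∧ b ≠ 0 ∧
      IsNilpotent (x - (algebraMap ℝ S a + algebraMap ℝ S b * I)) := by
  -- an irreducible real polynomial with nilpotent value
  have hq : ∃ q : ℝ[X], Irreducible q ∧ IsNilpotent (aeval x q) := by
    by_contra hcon
    push Not at hcon
    rcases subsingleton_or_nontrivial S with hsub | hnon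
    · exact hcon X irreducible_X ⟨1, Subsingleton.elim _ _⟩
    have hint : IsIntegral ℝ x := Algebra.IsIntegral.isIntegral x
    have hu : ∀ p : ℝ[X], p ≠ 0 → IsUnit (aeval x p) := by
      intro p
      induction p using WfDvdMonoid.induction_on_irreducible with
      | zero => intro h; exact absurd rfl h
      | unit u hu => intro _; exact hu.map (aeval x)
      | mul a i ha hi ih =>
        intro _
        rw [map_mul]
        exact ((hS _).resolve_left (hcon i hi)).mul (ih ha)
    have := hu _ (minpoly.ne_zero hint)
    rw [minpoly.aeval] at this
    exact not_isUnit_zero this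
  obtain ⟨q, hqi, hqn⟩ := hq
  have hdeg : q.natDegree ≤ 2 := natDegree_le_of_degree_le hqi.degree_le_two
  have hpos : 0 < q.natDegree := hqi.natDegree_pos
  by_cases h1 : q.natDegree = 1
  · left
    have ha : q.coeff 1 ≠ 0 := by
      rw [← h1]; exact leadingCoeff_ne_zero.2 hqi.ne_zero
    rw [eq_X_add_C_of_natDegree_le_one h1.le] at hqn
    refine ⟨-(q.coeff 0 / q.coeff 1), ?_⟩
    have : x - algebraMap ℝ S (-(q.coeff 0 / q.coeff 1))
        = algebraMap ℝ S (q.coeff 1)⁻¹ * aeval x (C (q.coeff 1) * X + C (q.coeff 0)) := by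
      simp only [map_add, map_mul, aeval_C, aeval_X, map_neg, div_eq_mul_inv]
      have : algebraMap ℝ S (q.coeff 1)⁻¹ * algebraMap ℝ S (q.coeff 1) = 1 := by
        rw [← map_mul, inv_mul_cancel₀ ha, map_one]
      linear_combination -x * this
    rw [this]
    exact (Commute.all _ _).isNilpotent_mul_left hqn
  · right
    have h2 : q.natDegree = 2 := by omega
    have hA : q.coeff 2 ≠ 0 := by
      rw [← h2]; exact leadingCoeff_ne_zero.2 hqi.ne_zero
    set A := q.coeff 2
    set B := q.coeff 1
    set D := q.coeff 0
    have hqe : q = C A * X ^ 2 + C B * X + C D := by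
      rw [q.as_sum_range_C_mul_X_pow, h2]
      simp [Finset.sum_range_succ, A, B, D]; ring
    have hroot : ∀ t : ℝ, A * t ^ 2 + B * t + D ≠ 0 := by
      intro t ht
      have : q.IsRoot t := by rw [hqe]; simp [ht]
      have := degree_eq_one_of_irreducible_of_root hqi this
      rw [degree_eq_natDegree hqi.ne_zero, h2] at this
      norm_num at this
    have hdisc : 0 < 4 * A * D - B ^ 2 := by
      by_contra hle
      push Not at hle
      have hs := Real.mul_self_sqrt (show (0 : ℝ) ≤ B ^ 2 - 4 * A * D by linarith)
      set s := √(B ^ 2 - 4 * A * D)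
      apply hroot ((-B + s) / (2 * A))
      field_simp
      linear_combination hs
    let δ := √(4 * A * D - B ^ 2) / (2 * A)
    let a := -B / (2 * A)
    have hδ2 : δ * δ = (4 * A * D - B ^ 2) / (4 * A ^ 2) := by
      simp only [δ]
      rw [div_mul_div_comm, Real.mul_self_sqrt hdisc.le]; ring
    have hδ : δ ≠ 0 := by
      simp only [δ]
      exact div_ne_zero (Real.sqrt_pos.2 hdisc).ne' (mul_ne_zero two_ne_zero hA)
    let I0 : S := algebraMap ℝ S δ⁻¹ * (x - algebraMap ℝ S a)
    have hval : I0 * I0 - (-1) = algebraMap ℝ S (δ⁻¹ * δ⁻¹ * A⁻¹) * aeval x q := by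
      have e1 : δ⁻¹ * δ⁻¹ * A⁻¹ * A = δ⁻¹ * δ⁻¹ := by field_simp
      have e2 : δ⁻¹ * δ⁻¹ * A⁻¹ * B = -2 * (δ⁻¹ * δ⁻¹ * a) := by simp only [a]; field_simp
      have e3 : δ⁻¹ * δ⁻¹ * A⁻¹ * D = δ⁻¹ * δ⁻¹ * (a * a) + 1 := by
        have : A⁻¹ * D = a * a + δ * δ := by rw [hδ2]; simp only [a]; field_simp; ring
        rw [mul_assoc, this, mul_add]; field_simp
      have f1 := congrArg (algebraMap ℝ S) e1
      have f2 := congrArg (algebraMap ℝ S) e2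
      have f3 := congrArg (algebraMap ℝ S) e3
      rw [hqe]
      simp only [map_add, map_mul, map_neg, map_one, map_ofNat, aeval_C, aeval_X, map_pow] at f1 f2 f3 ⊢
      simp only [I0]
      linear_combination -(x^2) * f1 - x * f2 - f3
    have hnil : IsNilpotent (I0 * I0 - (-1)) := by
      rw [hval]; exact (Commute.all _ _).isNilpotent_mul_left hqn
    have hunit : IsUnit I0 := by
      have : IsUnit (I0 * I0) := by
        have := hnil.isUnit_add_left_of_commute (u := -1) isUnit_one.neg (Commute.all _ _)
        simpa using this
      exact isUnit_of_mul_isUnit_left this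
    obtain ⟨I, hI, hIn⟩ := newton_sqrt I0 (-1) hunit hnil
    refine ⟨I, a, δ, hI, hδ, ?_⟩
    have : x - (algebraMap ℝ S a + algebraMap ℝ S δ * I) = algebraMap ℝ S δ * (I0 - I) := by
      have : algebraMap ℝ S δ * algebraMap ℝ S δ⁻¹ = 1 := by
        rw [← map_mul, mul_inv_cancel₀ hδ, map_one]
      simp only [I0]
      linear_combination -(x - algebraMap ℝ S a) * this
    rw [this]
    exact (Commute.all _ _).isNilpotent_mul_left hIn

theorem comm_L2 [Module.Finite ℝ S] (hS : ∀ u : S, IsNilpotent u ∨ IsUnit u) (c : S)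
    (hc : IsUnit c) : ∃ d : S, d * d = c ∨ d * d = -c := by
  have fin : ∀ (y w : S), IsUnit y → IsNilpotent (w * w - y) → ∃ d, d * d = y := by
    intro y w hy hn
    have hw : IsUnit (w * w) := by
      have := hn.isUnit_add_left_of_commute hy (Commute.all _ _)
      simpa using this
    obtain ⟨d, hd, -⟩ := newton_sqrt w y (isUnit_of_mul_isUnit_left hw) hn
    exact ⟨d, hd⟩
  rcases comm_L1 hS c with ⟨μ, hμ⟩ | ⟨I, a, b, hI, hb, hn⟩
  · rcases le_total 0 μ with h | h
    · obtain ⟨d, hd⟩ := fin c (algebraMap ℝ S (√μ)) hc (by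
        rw [← map_mul, Real.mul_self_sqrt h, ← neg_sub]; exact hμ.neg)
      exact ⟨d, Or.inl hd⟩
    · obtain ⟨d, hd⟩ := fin (-c) (algebraMap ℝ S (√(-μ))) hc.neg (by
        rw [← map_mul, Real.mul_self_sqrt (by linarith), map_neg]
        convert! hμ using 1; ring)
      exact ⟨d, Or.inr hd⟩
  · obtain ⟨w, hw⟩ := IsAlgClosed.exists_eq_mul_self (⟨a, b⟩ : ℂ)
    obtain ⟨d, hd⟩ := fin c (algebraMap ℝ S w.re + algebraMap ℝ S w.im * I) hc (by
      have h1 := congrArg (algebraMap ℝ S) (congrArg Complex.re hw)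
      have h2 := congrArg (algebraMap ℝ S) (congrArg Complex.im hw)
      simp only [Complex.mul_re, Complex.mul_im, map_sub, map_add, map_mul] at h1 h2
      rw [← isNilpotent_neg_iff]
      convert! hn using 1
      linear_combination h1 + h2 * I - algebraMap ℝ S w.im * algebraMap ℝ S w.im * hI)
    exact ⟨d, Or.inl hd⟩

end commpart

section nilpart

theorem end_ext_isCompl {K V : Type*} [DivisionRing K] [AddCommGroup V] [Module K V]
    {p q : Submodule K V} (hpq : IsCompl p q) {a b : Module.End K V}
    (h1 : ∀ x ∈ p, a x = b x) (h2 : ∀ x ∈ q, a x = b x) : a = b := by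
  ext x
  have hx : x ∈ p ⊔ q := by rw [hpq.sup_eq_top]; trivial
  obtain ⟨y, hy, z, hz, rfl⟩ := Submodule.mem_sup.1 hx
  rw [map_add, map_add, h1 y hy, h2 z hz]

theorem exists_cyclic_split {K V : Type*} [DivisionRing K] [AddCommGroup V] [Module K V]
    [Module.Finite K V] [Nontrivial V] (T : Module.End K V) (hT : IsNilpotent T) :
    ∃ (m : ℕ) (v : V) (U : Submodule K V), 0 < m ∧ T ^ m = 0 ∧
      LinearIndependent K (fun k : Fin m => (T ^ (k : ℕ)) v) ∧
      (∀ x ∈ U, T x ∈ U) ∧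
      IsCompl (Submodule.span K (Set.range fun k : Fin m => (T ^ (k : ℕ)) v)) U := by
  classical
  obtain ⟨m, hm, hmin⟩ : ∃ m, T ^ m = 0 ∧ ∀ k < m, T ^ k ≠ 0 :=
    ⟨Nat.find hT, Nat.find_spec hT, fun k hk => Nat.find_min hT hk⟩
  have hmpos : 0 < m := by
    rcases Nat.eq_zero_or_pos m with h | h
    · subst h
      rw [pow_zero] at hm
      exact absurd hm one_ne_zero
    · exact h
  have hbig : ∀ k, m ≤ k → T ^ k = 0 := fun k hk => pow_eq_zero_of_le hk hm
  obtain ⟨v, hv⟩ : ∃ v, (T ^ (m - 1)) v ≠ 0 := by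
    by_contra hcon
    push Not at hcon
    exact hmin (m - 1) (by omega) (LinearMap.ext hcon)
  obtain ⟨f, hf⟩ : ∃ f : V →ₗ[K] K, f ((T ^ (m - 1)) v) ≠ 0 := by
    obtain ⟨f, hf, -⟩ := Submodule.exists_le_ker_of_notMem (K := K) (p := (⊥ : Submodule K V))
      (v := (T ^ (m - 1)) v) (by simpa using hv)
    exact ⟨f, hf⟩
  let F : V →ₗ[K] (Fin m → K) := LinearMap.pi fun j => f ∘ₗ (T ^ (j : ℕ))
  have hF : ∀ x (j : Fin m), F x j = f ((T ^ (j : ℕ)) x) := fun x j => rfl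
  have key : ∀ a : Fin m → K, F (∑ k, a k • (T ^ (k : ℕ)) v) = 0 → a = 0 := by
    intro a ha
    have hall : ∀ (k : ℕ) (hk : k < m), a ⟨k, hk⟩ = 0 := by
      intro k
      induction k using Nat.strong_induction_on with
      | _ k ih =>
        intro hk
        have h1 := congrFun ha ⟨m - 1 - k, by omega⟩
        rw [hF, map_sum, map_sum, Finset.sum_eq_single ⟨k, hk⟩] at h1
        · rw [map_smul, map_smul, ← Module.End.mul_apply, ← pow_add] at h1
          simp only at h1
          rw [show m - 1 - k + k = m - 1 by omega] at h1
          rw [smul_eq_mul] at h1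
          exact (mul_eq_zero.1 h1).resolve_right hf
        · intro l _ hl
          rcases lt_or_ge (l : ℕ) k with h | h
          · rw [ih l h l.2]; simp
          · have : k < (l : ℕ) := lt_of_le_of_ne h (fun h' => hl (Fin.ext h'.symm))
            rw [map_smul, ← Module.End.mul_apply, ← pow_add, hbig _ (by simp only; omega)]
            simp
        · intro h; exact absurd (Finset.mem_univ _) h
    funext k
    exact hall k k.2
  have li : LinearIndependent K (fun k : Fin m => (T ^ (k : ℕ)) v) := by
    rw [Fintype.linearIndependent_iff]
    intro a ha k
    rw [key a (by rw [ha, map_zero])]; rfl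
  refine ⟨m, v, LinearMap.ker F, hmpos, hm, li, ?_, ?_⟩
  · intro x hx
    rw [LinearMap.mem_ker] at hx ⊢
    funext j
    rw [hF, ← Module.End.mul_apply, ← pow_succ]
    rcases lt_or_ge ((j : ℕ) + 1) m with h | h
    · exact congrFun hx ⟨j + 1, h⟩
    · rw [hbig _ h]; simp
  · have hdis : Disjoint (Submodule.span K (Set.range fun k : Fin m => (T ^ (k : ℕ)) v))
        (LinearMap.ker F) := by
      rw [Submodule.disjoint_def]
      intro x hx hx2
      obtain ⟨a, rfl⟩ := (Submodule.mem_span_range_iff_exists_fun K).1 hx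
      rw [key a hx2]; simp
    refine ⟨hdis, codisjoint_iff.2 ?_⟩
    apply Submodule.eq_top_of_disjoint _ _ _ hdis
    rw [finrank_span_eq_card li, Fintype.card_fin]
    have h1 := LinearMap.finrank_range_add_finrank_ker F
    have h2 := Submodule.finrank_le (LinearMap.range F)
    rw [Module.finrank_fin_fun] at h2
    omega

/-- the quaternion `i` -/
def qI : Quaternion ℝ := ⟨0, 1, 0, 0⟩

theorem qI_mul_self : qI * qI = -1 := by
  apply Quaternion.ext <;>
    simp only [Quaternion.re_mul, Quaternion.imI_mul, Quaternion.imJ_mul, Quaternion.imK_mul,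
      Quaternion.re_neg, Quaternion.imI_neg, Quaternion.imJ_neg, Quaternion.imK_neg,
      Quaternion.re_one, Quaternion.imI_one, Quaternion.imJ_one, Quaternion.imK_one] <;>
    simp [qI]

theorem nilp_lemma (ε : ℤ) (hε : ε * ε = 1) (d : ℕ) :
    ∀ (V : Type) [AddCommGroup V] [Module (Quaternion ℝ) V] [Module.Finite (Quaternion ℝ) V]
      (T : Module.End (Quaternion ℝ) V), Module.finrank (Quaternion ℝ) V = d → IsNilpotent T →
      ∃ h : Module.End (Quaternion ℝ) V, h * h = -1 ∧ h * T = ε • (T * h) := by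
  induction d using Nat.strong_induction_on with
  | _ d ih =>
  intro V _ _ _ T hd hT
  rcases subsingleton_or_nontrivial V with hs | hn
  · exact ⟨0, LinearMap.ext fun x => Subsingleton.elim _ _,
      LinearMap.ext fun x => Subsingleton.elim _ _⟩
  obtain ⟨m, v, U, hm0, hm, li, hU, hc⟩ := exists_cyclic_split T hT
  set W := Submodule.span (Quaternion ℝ) (Set.range fun k : Fin m => (T ^ (k : ℕ)) v) with hW
  have hvW : ∀ k : Fin m, (T ^ (k : ℕ)) v ∈ W := fun k => Submodule.subset_span ⟨k, rfl⟩
  have hUlt : Module.finrank (Quaternion ℝ) U < d := by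
    have h1 := Submodule.finrank_add_eq_of_isCompl hc
    rw [hW, finrank_span_eq_card li, Fintype.card_fin] at h1
    omega
  have hTU : IsNilpotent (T.restrict hU) := by
    refine ⟨m, ?_⟩
    rw [Module.End.pow_restrict]
    ext x
    simp [hm]
  obtain ⟨hu, hu1, hu2⟩ := ih _ hUlt U (T.restrict hU) rfl hTU
  let b := Module.Basis.span li
  let φ : W →ₗ[Quaternion ℝ] V :=
    b.constr ℕ fun k => (ε ^ (k : ℕ)) • qI • (T ^ (k : ℕ)) v
  let h : Module.End (Quaternion ℝ) V := LinearMap.ofIsCompl hc φ (U.subtype ∘ₗ hu)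
  have hh1 : ∀ k : Fin m, h ((T ^ (k : ℕ)) v) = (ε ^ (k : ℕ)) • qI • (T ^ (k : ℕ)) v := by
    intro k
    have e : (b k : V) = (T ^ (k : ℕ)) v :=
      congrArg Subtype.val (Module.Basis.span_apply li k)
    have := LinearMap.ofIsCompl_apply_left hc (φ := φ) (ψ := U.subtype ∘ₗ hu) (b k)
    rw [e] at this
    simp only [h]
    rw [this]
    simp only [φ, Module.Basis.constr_basis]
  have hh1' : ∀ k : ℕ, h ((T ^ k) v) = (ε ^ k) • qI • (T ^ k) v := by
    intro k
    rcases lt_or_ge k m with hk | hk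
    · exact hh1 ⟨k, hk⟩
    · rw [pow_eq_zero_of_le hk hm]; simp
  have hh2 : ∀ x : U, h x = hu x := fun x =>
    LinearMap.ofIsCompl_apply_right hc x
  refine ⟨h, ?_, ?_⟩
  · refine end_ext_isCompl hc ?_ ?_
    · intro x hx
      induction hx using Submodule.span_induction with
      | mem x hx =>
        obtain ⟨k, rfl⟩ := hx
        simp only [Module.End.mul_apply, hh1, map_zsmul, map_smul]
        rw [smul_comm qI, smul_smul, smul_smul, ← mul_pow, hε, qI_mul_self]
        simp
      | zero => simp
      | add x y _ _ h1 h2 => rw [map_add, map_add, h1, h2]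
      | smul a x _ h1 => rw [map_smul, map_smul, h1]
    · intro x hx
      have := congrArg Subtype.val (LinearMap.congr_fun hu1 ⟨x, hx⟩)
      rw [Module.End.mul_apply, hh2 ⟨x, hx⟩, hh2]
      simpa using this
  · refine end_ext_isCompl hc ?_ ?_
    · intro x hx
      induction hx using Submodule.span_induction with
      | mem x hx =>
        obtain ⟨k, rfl⟩ := hx
        simp only [Module.End.mul_apply, LinearMap.smul_apply, hh1, map_zsmul, map_smul]
        rw [← Module.End.mul_apply T, ← pow_succ', hh1', smul_smul, pow_succ' ε]
      | zero => simp
      | add x y _ _ h1 h2 => rw [map_add, map_add, h1, h2]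
      | smul a x _ h1 => rw [map_smul, map_smul, h1]
    · intro x hx
      have := congrArg Subtype.val (LinearMap.congr_fun hu2 ⟨x, hx⟩)
      have h3 := hh2 (T.restrict hU ⟨x, hx⟩)
      simp only [Module.End.mul_apply, LinearMap.smul_apply] at this ⊢
      rw [hh2 ⟨x, hx⟩]
      rw [← h3] at this
      simpa using this

end nilpart

section mainpart
set_option linter.deprecated false

theorem adj_local {R : Type*} [Ring R] [Algebra ℝ R] [Module.Finite ℝ R] (x : R)
    (hx : ∀ y ∈ Algebra.adjoin ℝ {x}, IsNilpotent y ∨ IsUnit y) :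
    ∀ u : Algebra.adjoin ℝ {x}, IsNilpotent u ∨ IsUnit u := by
  rintro ⟨u, hu⟩
  rcases hx u hu with ⟨k, hk⟩ | h
  · exact Or.inl ⟨k, Subtype.ext (by simpa using hk)⟩
  · right
    apply IsArtinianRing.isUnit_of_nonZeroDivisor_of_isIntegral' (R := ℝ)
    have hb := IsUnit.mem_nonZeroDivisors h
    exact comap_nonZeroDivisors_le_of_injective
      (f := (Algebra.adjoin ℝ {x}).subtype) Subtype.val_injective hb

theorem adj_L1 {R : Type*} [Ring R] [Algebra ℝ R] [Module.Finite ℝ R] (x : R)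
    (hx : ∀ y ∈ Algebra.adjoin ℝ {x}, IsNilpotent y ∨ IsUnit y) :
    (∃ μ : ℝ, IsNilpotent (x - algebraMap ℝ R μ)) ∨
      ∃ I ∈ Algebra.adjoin ℝ {x}, I * I = -1 := by
  let _ : CommRing (Algebra.adjoin ℝ {x}) := Algebra.adjoinCommRingOfComm ℝ (by
    intro a ha b hb; rw [Set.mem_singleton_iff] at ha hb; rw [ha, hb])
  have hS := adj_local x hx
  rcases comm_L1 (S := Algebra.adjoin ℝ {x}) hS ⟨x, Algebra.self_mem_adjoin_singleton ℝ x⟩ with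
    ⟨μ, k, hk⟩ | ⟨I, a, b, hI, -⟩
  · exact Or.inl ⟨μ, k, congrArg Subtype.val hk⟩
  · exact Or.inr ⟨I, I.2, congrArg Subtype.val hI⟩

theorem adj_L2 {R : Type*} [Ring R] [Algebra ℝ R] [Module.Finite ℝ R] (x : R)
    (hx : ∀ y ∈ Algebra.adjoin ℝ {x}, IsNilpotent y ∨ IsUnit y) (hu : IsUnit x) :
    ∃ d ∈ Algebra.adjoin ℝ {x}, d * d = x ∨ d * d = -x := by
  let _ : CommRing (Algebra.adjoin ℝ {x}) := Algebra.adjoinCommRingOfComm ℝ (by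
    intro a ha b hb; rw [Set.mem_singleton_iff] at ha hb; rw [ha, hb])
  have hS := adj_local x hx
  have hu' : IsUnit (⟨x, Algebra.self_mem_adjoin_singleton ℝ x⟩ : Algebra.adjoin ℝ {x}) := by
    rcases hS ⟨x, Algebra.self_mem_adjoin_singleton ℝ x⟩ with ⟨k, hk⟩ | h
    · have h1 : x ^ k = 0 := congrArg Subtype.val hk
      have h2 : IsUnit (0 : R) := h1 ▸ hu.pow k
      have h3 : (0 : R) = 1 := isUnit_zero_iff.1 h2
      have : Subsingleton R := subsingleton_of_zero_eq_one h3
      exact isUnit_of_subsingleton _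
    · exact h
  obtain ⟨d, hd⟩ := comm_L2 (S := Algebra.adjoin ℝ {x}) hS _ hu'
  refine ⟨d, d.2, ?_⟩
  rcases hd with h | h
  · exact Or.inl (congrArg Subtype.val h)
  · exact Or.inr (congrArg Subtype.val h)

theorem commute_of_mem_adj {R : Type*} [Ring R] [Algebra ℝ R] {x y a : R}
    (hy : y ∈ Algebra.adjoin ℝ {x}) (h : Commute x a) : Commute y a := by
  have : Algebra.adjoin ℝ {x} ≤ Subalgebra.centralizer ℝ {a} := by
    refine Algebra.adjoin_le ?_
    intro z hz
    rw [Set.mem_singleton_iff] at hz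
    subst hz
    rw [SetLike.mem_coe, Subalgebra.mem_centralizer_iff]
    intro b hb
    rw [Set.mem_singleton_iff] at hb
    subst hb
    exact h.eq.symm
  have h2 := this hy
  rw [Subalgebra.mem_centralizer_iff] at h2
  exact (h2 a rfl).symm

/-- purely ring-theoretic construction in the case `D` invertible -/
theorem ring_final {R : Type*} [Ring R] (D D' S X P : R) (h1 : D * D' = 1) (h2 : D' * D = 1)
    (hPD : P * D = D * (1 - P)) (hXX : X * X = -P) (hPX : P * X = X)
    (hXP : X * P = X)
    (hXS : X * S = S * X) (hSD : S * D = D * S) (hDD : D * D = S * S - 4) :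
    ∃ h : R, h * h = -1 ∧ h * D = -(D * h) ∧ h * S = S * h := by
  have hPD' : P * D' = D' * (1 - P) := by
    have : D' * (D * (1 - (1 - P))) * D' = D' * ((1 - P) * D) * D' := by
      rw [show (1 - P) * D = D * (1 - (1 - P)) by
        rw [sub_mul, hPD]; noncomm_ring]
    calc P * D' = (D' * D) * P * D' := by rw [h2, one_mul]
      _ = D' * (D * (1 - (1 - P))) * D' := by noncomm_ring
      _ = D' * (1 - P) * (D * D') := by rw [this]; noncomm_ring
      _ = D' * (1 - P) := by rw [h1, mul_one]
  have hQX : (1 - P) * X = 0 := by rw [sub_mul, hPX, one_mul, sub_self]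
  have e1 : X * D * X = 0 := by
    calc X * D * X = X * (P * D) * X := by rw [← mul_assoc X P, hXP]
      _ = X * D * ((1 - P) * X) := by rw [hPD]; noncomm_ring
      _ = 0 := by rw [hQX, mul_zero]
  have e2 : X * D' * X = 0 := by
    calc X * D' * X = X * (P * D') * X := by rw [← mul_assoc X P, hXP]
      _ = X * D' * ((1 - P) * X) := by rw [hPD']; noncomm_ring
      _ = 0 := by rw [hQX, mul_zero]
  have hXDD : X * (D * D) = D * D * X := by
    rw [hDD, mul_sub, sub_mul, ← mul_assoc, hXS, mul_assoc, hXS, mul_assoc]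
    congr 1
    noncomm_ring
  have hSD' : S * D' = D' * S := by
    calc S * D' = (D' * D) * S * D' := by rw [h2, one_mul]
      _ = D' * (S * D) * D' := by rw [hSD]; noncomm_ring
      _ = D' * S * (D * D') := by noncomm_ring
      _ = D' * S := by rw [h1, mul_one]
  refine ⟨X - D * X * D', ?_, ?_, ?_⟩
  · calc (X - D * X * D') * (X - D * X * D')
        = X * X + D * X * (D' * D) * X * D' - (X * D * X) * D' - D * (X * D' * X) := by noncomm_ring
      _ = -P - (D * P) * D' := by
          rw [e1, e2, h2, mul_one, mul_assoc D X X, hXX]; noncomm_ring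
      _ = -P - ((1 - P) * D) * D' := by rw [sub_mul 1 P, hPD]; noncomm_ring
      _ = -1 := by rw [mul_assoc, h1]; noncomm_ring
  · calc (X - D * X * D') * D = X * D - D * X * (D' * D) := by noncomm_ring
      _ = X * D - D * X := by rw [h2, mul_one]
      _ = X * (D * D) * D' - D * X := by
          rw [← mul_assoc X D D, mul_assoc (X * D), h1, mul_one]
      _ = -(D * (X - D * X * D')) := by rw [hXDD]; noncomm_ring
  · calc (X - D * X * D') * S = X * S - D * X * (D' * S) := by noncomm_ring
      _ = S * X - D * (X * S) * D' := by
          rw [← hSD', show D * X * (S * D') = D * (X * S) * D' by noncomm_ring, hXS]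
      _ = S * X - (D * S) * X * D' := by rw [hXS]; noncomm_ring
      _ = S * (X - D * X * D') := by rw [← hSD]; noncomm_ring

theorem two_cancel {V : Type} [AddCommGroup V] [Module (Quaternion ℝ) V] {y z : Module.End (Quaternion ℝ) V}
    (h : y + y = z + z) : y = z := by
  ext v
  have h1 := LinearMap.congr_fun h v
  simp only [LinearMap.add_apply, ← two_smul (Quaternion ℝ)] at h1
  have h2 : (2 : (Quaternion ℝ)) ≠ 0 := by
    rw [← map_ofNat (algebraMap ℝ (Quaternion ℝ)) 2]
    exact (map_ne_zero _).2 two_ne_zero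
  exact smul_right_injective V h2 h1

/-- the unipotent case -/
theorem unip_case (V : Type) [AddCommGroup V] [Module (Quaternion ℝ) V] [Module.Finite (Quaternion ℝ) V]
    (A C : Module.End (Quaternion ℝ) V) (h1 : (A + 1) * C = 1) (h2 : C * (A + 1) = 1)
    (hn : IsNilpotent (A - 1)) : ∃ h : Module.End (Quaternion ℝ) V, h * h = -1 ∧ A * h * A = h := by
  have hcA : A * C = C * A := by
    have e1 : A * C = 1 - C := by rw [← h1]; noncomm_ring
    have e2 : C * A = 1 - C := by rw [← h2]; noncomm_ring
    rw [e1, e2]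
  have hcomm : Commute (A - 1) C := by
    show (A - 1) * C = C * (A - 1)
    rw [sub_mul, mul_sub, hcA]; simp
  have hN : IsNilpotent ((A - 1) * C) := hcomm.isNilpotent_mul_right hn
  obtain ⟨h, hh, hhN⟩ := nilp_lemma (-1) (by norm_num) _ V ((A - 1) * C) rfl hN
  refine ⟨h, hh, ?_⟩
  rw [neg_smul, one_smul] at hhN
  -- h (A-1) C = -(A-1) C h
  have k1 : h * (A - 1) = -((A - 1) * C * h * (A + 1)) := by
    calc h * (A - 1) = h * ((A - 1) * C) * (A + 1) := by
          rw [mul_assoc, mul_assoc (A - 1), h2, mul_one]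
      _ = _ := by rw [hhN]; noncomm_ring
  have k2 : (A + 1) * h * (A - 1) = -((A - 1) * h * (A + 1)) := by
    calc (A + 1) * h * (A - 1) = (A + 1) * (h * (A - 1)) := by noncomm_ring
      _ = -((A + 1) * ((A - 1) * C) * h * (A + 1)) := by rw [k1]; noncomm_ring
      _ = -(((A + 1) * C) * (A - 1) * h * (A + 1)) := by rw [hcomm.eq]; noncomm_ring
      _ = _ := by rw [h1, one_mul]
  have k3 : A * h * A + A * h * A = h + h := by
    have e1 : A * h * A + A * h * A
        = (A + 1) * h * (A - 1) + A * h - h * A + h + A * h * A := by noncomm_ring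
    rw [e1, k2]; noncomm_ring
  exact two_cancel k3

end mainpart

section indecpart

/-- the case where the reverser is an involution and `S = A + A⁻¹` has one real eigenvalue -/
theorem invol_case (V : Type) [AddCommGroup V] [Module (Quaternion ℝ) V]
    [Module.Finite (Quaternion ℝ) V]
    [Module ℝ V] [SMulCommClass (Quaternion ℝ) ℝ V] [IsScalarTower ℝ (Quaternion ℝ) V]
    (g S : Module.End (Quaternion ℝ) V) (hg : g * g = 1) (hgS : g * S = S * g) (μ : ℝ)
    (hn : IsNilpotent (S - algebraMap ℝ (Module.End (Quaternion ℝ) V) μ)) :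
    ∃ X P : Module.End (Quaternion ℝ) V, P = algebraMap ℝ _ (1 / 2 : ℝ) * (1 + g) ∧
      X * X = -P ∧ P * X = X ∧ X * P = X ∧ X * S = S * X := by
  let P : Module.End (Quaternion ℝ) V := algebraMap ℝ _ (1 / 2 : ℝ) * (1 + g)
  have hhalf : (algebraMap ℝ (Module.End (Quaternion ℝ) V) (1 / 2 : ℝ)) * 2 = 1 := by
    rw [← map_ofNat (algebraMap ℝ (Module.End (Quaternion ℝ) V)) 2, ← map_mul]
    norm_num
  let Q : Submodule (Quaternion ℝ) V := LinearMap.ker (g - 1)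
  have hQ : ∀ x, x ∈ Q ↔ g x = x := by
    intro x
    simp only [Q, LinearMap.mem_ker, LinearMap.sub_apply, Module.End.one_apply, sub_eq_zero]
  have hgP : g * P = P := by
    simp only [P]
    rw [← mul_assoc, ← Algebra.commutes, mul_assoc, mul_add, hg, mul_one, add_comm]
  have hPQ : ∀ x, P x ∈ Q := by
    intro x
    rw [hQ, ← Module.End.mul_apply, hgP]
  have hPid : ∀ x ∈ Q, P x = x := by
    intro x hx
    rw [hQ] at hx
    have h1 : (1 + g) x = (2 : Module.End (Quaternion ℝ) V) x := by
      rw [← one_add_one_eq_two, LinearMap.add_apply, LinearMap.add_apply, hx]; rfl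
    simp only [P]
    rw [Module.End.mul_apply, h1, ← Module.End.mul_apply, hhalf, Module.End.one_apply]
  set T : Module.End (Quaternion ℝ) V := S - algebraMap ℝ _ μ with hT
  have hgT : g * T = T * g := by
    rw [hT, mul_sub, sub_mul, hgS, Algebra.commutes]
  have hTQ : ∀ x ∈ Q, T x ∈ Q := by
    intro x hx
    rw [hQ] at hx ⊢
    rw [← Module.End.mul_apply, hgT, Module.End.mul_apply, hx]
  have hPT : P * T = T * P := by
    simp only [P]
    rw [mul_assoc, add_mul, hgT, ← mul_assoc, ← Algebra.commutes _ T, mul_assoc,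
      mul_add T, one_mul, mul_one]
  have hnQ : IsNilpotent (T.restrict hTQ) := by
    obtain ⟨k, hk⟩ := hn
    refine ⟨k, ?_⟩
    rw [Module.End.pow_restrict]
    ext x
    simp [hk]
  obtain ⟨J, hJ1, hJ2⟩ := nilp_lemma 1 (by norm_num) _ Q (T.restrict hTQ) rfl hnQ
  rw [one_smul] at hJ2
  let X : Module.End (Quaternion ℝ) V := Q.subtype ∘ₗ J ∘ₗ (LinearMap.codRestrict Q P hPQ)
  have hX : ∀ x, X x = (J ⟨P x, hPQ x⟩ : V) := fun x => rfl
  have hXQ : ∀ x : Q, X x = (J x : V) := by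
    intro x
    rw [hX]
    congr 2
    exact Subtype.ext (hPid x x.2)
  have hXT : X * T = T * X := by
    ext x
    rw [Module.End.mul_apply, Module.End.mul_apply, hX, hX]
    have h1 := congrArg Subtype.val (LinearMap.congr_fun hJ2 ⟨P x, hPQ x⟩)
    have h2 : (⟨P (T x), hPQ (T x)⟩ : Q) = T.restrict hTQ ⟨P x, hPQ x⟩ := by
      apply Subtype.ext
      exact LinearMap.congr_fun hPT x
    rw [h2]
    exact h1
  refine ⟨X, P, rfl, ?_, ?_, ?_, ?_⟩
  · ext x
    rw [Module.End.mul_apply, hX x, hXQ]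
    have h1 := congrArg Subtype.val (LinearMap.congr_fun hJ1 ⟨P x, hPQ x⟩)
    exact h1
  · ext x
    rw [Module.End.mul_apply, hX x, hPid _ (Subtype.property _)]
  · ext x
    rw [Module.End.mul_apply, hX x, hXQ ⟨P x, hPQ x⟩]
  · have h1 : S = T + algebraMap ℝ _ μ := by rw [hT]; abel
    rw [h1, mul_add, add_mul, hXT, Algebra.commutes]

theorem indec_case (V : Type) [AddCommGroup V] [Module (Quaternion ℝ) V]
    [Module.Finite (Quaternion ℝ) V]
    [Module ℝ V] [SMulCommClass (Quaternion ℝ) ℝ V] [IsScalarTower ℝ (Quaternion ℝ) V]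
    (A B g : Module.End (Quaternion ℝ) V) (hAB : A * B = 1) (hBA : B * A = 1) (hgu : IsUnit g)
    (hAg : A * g * A = g)
    (hE : ∀ u : Module.End (Quaternion ℝ) V, Commute u A → Commute u g →
      IsNilpotent u ∨ IsUnit u) :
    ∃ h : Module.End (Quaternion ℝ) V, h * h = -1 ∧ A * h * A = h := by
  have : Module.Finite ℝ V := Module.Finite.trans (Quaternion ℝ) V
  have hfin : Module.Finite ℝ (Module.End (Quaternion ℝ) V) := by
    let r : Module.End (Quaternion ℝ) V →ₗ[ℝ] Module.End ℝ V :=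
      { toFun := fun f => f.restrictScalars ℝ
        map_add' := fun _ _ => rfl
        map_smul' := fun _ _ => rfl }
    apply Module.Finite.of_injective r
    intro a b hab
    ext x
    exact LinearMap.congr_fun hab x
  -- basic relations
  have hgA : g * A = B * g := by
    calc g * A = (B * A) * g * A := by rw [hBA, one_mul]
      _ = B * (A * g * A) := by noncomm_ring
      _ = B * g := by rw [hAg]
  have hgB : g * B = A * g := by
    calc g * B = (A * g * A) * B := by rw [hAg]
      _ = A * g * (A * B) := by noncomm_ring
      _ = A * g := by rw [hAB, mul_one]
  have hcA : Commute (g * g) A := by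
    show g * g * A = A * (g * g)
    rw [mul_assoc, hgA, ← mul_assoc, hgB, mul_assoc]
  have hcg : Commute (g * g) g := by
    show g * g * g = g * (g * g)
    rw [mul_assoc]
  obtain ⟨d, hd, hdd⟩ := adj_L2 (g * g)
    (fun y hy => hE y (commute_of_mem_adj hy hcA) (commute_of_mem_adj hy hcg)) (hgu.mul hgu)
  have hdA : Commute d A := commute_of_mem_adj hd hcA
  have hdg : Commute d g := commute_of_mem_adj hd hcg
  have hdu : IsUnit d := by
    have h1 : IsUnit (d * d) := by
      rcases hdd with h | h
      · rw [h]; exact hgu.mul hgu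
      · rw [h]; exact (hgu.mul hgu).neg
    exact ((Commute.refl d).isUnit_mul_iff.1 h1).1
  obtain ⟨e, rfl⟩ := hdu
  set d' : Module.End (Quaternion ℝ) V := ↑(e⁻¹ : (Module.End (Quaternion ℝ) V)ˣ) with hd'
  have hd'A : Commute d' A := hdA.units_inv_left
  have hd'g : Commute d' g := hdg.units_inv_left
  have hdd' : (e : Module.End (Quaternion ℝ) V) * d' = 1 := e.mul_inv
  -- normalised reverser
  have hg1A : A * (g * d') * A = g * d' := by
    calc A * (g * d') * A = A * g * (d' * A) := by noncomm_ring
      _ = A * g * A * d' := by rw [hd'A.eq]; noncomm_ring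
      _ = g * d' := by rw [hAg]
  have hg1g1 : (g * d') * (g * d') = (g * g) * (d' * d') := by
    calc (g * d') * (g * d') = g * (d' * g) * d' := by noncomm_ring
      _ = _ := by rw [hd'g.eq]; noncomm_ring
  have hee : (e : Module.End (Quaternion ℝ) V) * e * (d' * d') = 1 := by
    calc (e : Module.End (Quaternion ℝ) V) * e * (d' * d') = e * (e * d') * d' := by noncomm_ring
      _ = 1 := by rw [hdd', mul_one, hdd']
  rcases hdd with hdd | hdd
  swap
  · refine ⟨g * d', ?_, hg1A⟩
    rw [hg1g1, show g * g = -((e : Module.End (Quaternion ℝ) V) * e) by rw [hdd, neg_neg],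
      neg_mul, hee]
  have hk : (g * d') * (g * d') = 1 := by rw [hg1g1, ← hdd, hee]
  -- from now on k = g d' is an involution
  have hSA : Commute (A + B) A := by
    show (A + B) * A = A * (A + B)
    rw [add_mul, mul_add, hAB, hBA]
  have hSg : Commute (A + B) g := by
    show (A + B) * g = g * (A + B)
    rw [add_mul, mul_add, hgA, hgB, add_comm]
  have hSk : Commute (A + B) (g * d') := by
    refine hSg.mul_right ?_
    exact ((hd'A.add_right (by
      show d' * B = B * d'
      calc d' * B = (B * A) * d' * B := by rw [hBA, one_mul]
        _ = B * (d' * A) * B := by rw [hd'A.eq]; noncomm_ring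
        _ = B * d' * (A * B) := by noncomm_ring
        _ = B * d' := by rw [hAB, mul_one]))).symm
  have h2c : ∀ x : Module.End (Quaternion ℝ) V, Commute 2 x := fun x => Commute.ofNat_left 2 x
  have h4u : IsUnit (4 : Module.End (Quaternion ℝ) V) := by
    have h := (isUnit_iff_ne_zero.2 (four_ne_zero : (4 : ℝ) ≠ 0)).map
      (algebraMap ℝ (Module.End (Quaternion ℝ) V))
    rwa [map_ofNat] at h
  have hsq1 : (A - 1) * (A - 1) = A * (A + B - 2) := by
    rw [mul_sub A (A + B), mul_add A A B, hAB]; noncomm_ring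
  have hsq2 : (A + 1) * (A + 1) = A * (A + B + 2) := by
    rw [mul_add A (A + B), mul_add A A B, hAB]; noncomm_ring
  have hAu : IsUnit A := ⟨⟨A, B, hAB, hBA⟩, rfl⟩
  rcases hE (A + B - 2) (hSA.sub_left (h2c A)) (hSg.sub_left (h2c g)) with hm | hm
  · -- A unipotent
    have hp : IsUnit (A + B + 2) := by
      have h1 : A + B + 2 = 4 + (A + B - 2) := by
        rw [show (4 : Module.End (Quaternion ℝ) V) = 2 + 2 by norm_num]; abel
      rw [h1]
      exact hm.isUnit_add_left_of_commute h4u (Commute.ofNat_right _ 4)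
    have hu : IsUnit (A + 1) := by
      have h1 : IsUnit ((A + 1) * (A + 1)) := by rw [hsq2]; exact hAu.mul hp
      exact ((Commute.refl _).isUnit_mul_iff.1 h1).1
    obtain ⟨c, hc⟩ := hu
    have hnil : IsNilpotent (A - 1) := by
      have h1 : IsNilpotent ((A - 1) * (A - 1)) := by
        rw [hsq1]
        exact (hSA.sub_left (h2c A)).symm.isNilpotent_mul_left hm
      obtain ⟨k, hk⟩ := h1
      exact ⟨2 * k, by rw [pow_mul, pow_two]; exact hk⟩
    refine unip_case V A ↑(c⁻¹ : (Module.End (Quaternion ℝ) V)ˣ) ?_ ?_ hnil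
    · rw [← hc]; exact c.mul_inv
    · rw [← hc]; exact c.inv_mul
  rcases hE (A + B + 2) (hSA.add_left (h2c A)) (hSg.add_left (h2c g)) with hp | hp
  · -- -A unipotent
    have hu : IsUnit (A - 1) := by
      have h1 : IsUnit ((A - 1) * (A - 1)) := by rw [hsq1]; exact hAu.mul hm
      exact ((Commute.refl _).isUnit_mul_iff.1 h1).1
    have hu' : IsUnit (-A + 1) := by
      rw [show -A + 1 = -(A - 1) by abel]; exact hu.neg
    obtain ⟨c, hc⟩ := hu'
    have hnil : IsNilpotent (-A - 1) := by
      have h1 : IsNilpotent ((A + 1) * (A + 1)) := by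
        rw [hsq2]
        exact (hSA.add_left (h2c A)).symm.isNilpotent_mul_left hp
      obtain ⟨k, hk⟩ := h1
      rw [show -A - 1 = -(A + 1) by abel]
      have h2 : IsNilpotent (A + 1) := ⟨2 * k, by rw [pow_mul, pow_two]; exact hk⟩
      exact h2.neg
    obtain ⟨h, hh1, hh2⟩ := unip_case V (-A) ↑(c⁻¹ : (Module.End (Quaternion ℝ) V)ˣ)
      (by rw [← hc]; exact c.mul_inv) (by rw [← hc]; exact c.inv_mul) hnil
    exact ⟨h, hh1, by simpa using hh2⟩
  -- D invertible
  have hDD : (A - B) * (A - B) = (A + B) * (A + B) - 4 := by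
    have e1 : (A - B) * (A - B) = (A + B) * (A + B) - (2 * (A * B) + 2 * (B * A)) := by
      noncomm_ring
    rw [e1, hAB, hBA]; norm_num
  have hDu : IsUnit (A - B) := by
    have h1 : IsUnit ((A - B) * (A - B)) := by
      have e1 : (A + B) * (A + B) - 4 = (A + B - 2) * (A + B + 2) := by
        rw [show (4 : Module.End (Quaternion ℝ) V) = 2 * 2 by norm_num]; noncomm_ring
      rw [hDD, e1]
      exact hm.mul hp
    exact ((Commute.refl _).isUnit_mul_iff.1 h1).1
  rcases adj_L1 (A + B)
    (fun y hy => hE y (commute_of_mem_adj hy hSA) (commute_of_mem_adj hy hSg)) with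
    ⟨μ, hμ⟩ | ⟨I, hI, hII⟩
  swap
  · have hIA : Commute I A := commute_of_mem_adj hI hSA
    have hIk : Commute I (g * d') := commute_of_mem_adj hI hSk
    refine ⟨g * d' * I, ?_, ?_⟩
    · calc g * d' * I * (g * d' * I) = g * d' * (I * (g * d')) * I := by noncomm_ring
        _ = ((g * d') * (g * d')) * (I * I) := by rw [hIk.eq]; noncomm_ring
        _ = -1 := by rw [hk, hII, one_mul]
    · calc A * (g * d' * I) * A = A * (g * d') * (I * A) := by noncomm_ring
        _ = A * (g * d') * A * I := by rw [hIA.eq]; noncomm_ring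
        _ = g * d' * I := by rw [hg1A]
  obtain ⟨X, P, hP, hXX, hPX, hXP, hXS⟩ :=
    invol_case V (g * d') (A + B) hk hSk.eq.symm μ hμ
  obtain ⟨D, hD⟩ := hDu
  have hkA : (g * d') * A = B * (g * d') := by
    calc (g * d') * A = (B * A) * (g * d') * A := by rw [hBA, one_mul]
      _ = B * (A * (g * d') * A) := by noncomm_ring
      _ = B * (g * d') := by rw [hg1A]
  have hkB : (g * d') * B = A * (g * d') := by
    calc (g * d') * B = (A * (g * d') * A) * B := by rw [hg1A]
      _ = A * (g * d') * (A * B) := by noncomm_ring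
      _ = A * (g * d') := by rw [hAB, mul_one]
  have hkD : (g * d') * (A - B) = -((A - B) * (g * d')) := by
    rw [mul_sub, sub_mul, hkA, hkB]; abel
  have hhalf : (algebraMap ℝ (Module.End (Quaternion ℝ) V) (1 / 2 : ℝ))
      + (algebraMap ℝ (Module.End (Quaternion ℝ) V) (1 / 2 : ℝ)) = 1 := by
    rw [← map_add]; norm_num
  have hPD : P * (A - B) = (A - B) * (1 - P) := by
    set w := algebraMap ℝ (Module.End (Quaternion ℝ) V) (1 / 2 : ℝ) with hw
    have hwc : ∀ y, w * y = y * w := fun y => Algebra.commutes _ _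
    have e1 : (1 : Module.End (Quaternion ℝ) V) - P = w * (1 - g * d') := by
      rw [hP, ← hhalf]
      nth_rewrite 1 [show w = w * 1 by rw [mul_one]]
      rw [hhalf]; nth_rewrite 2 [show w = w * 1 by rw [mul_one]]
      noncomm_ring
    have e2 : P * (A - B) = w * ((A - B) - (A - B) * (g * d')) := by
      rw [hP, mul_assoc, add_mul, one_mul, hkD, ← sub_eq_add_neg]
    rw [e1, e2, ← mul_assoc (A - B) w, ← hwc (A - B), mul_assoc w, mul_sub (A - B) 1, mul_one]
  obtain ⟨h, hh, hhD, hhS⟩ := ring_final (A - B) ↑(D⁻¹ : (Module.End (Quaternion ℝ) V)ˣ)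
    (A + B) X P (by rw [← hD]; exact D.mul_inv) (by rw [← hD]; exact D.inv_mul) hPD hXX hPX hXP
    hXS (by
      have e1 : (A + B) * (A - B) = A * A - B * B - A * B + B * A := by noncomm_ring
      have e2 : (A - B) * (A + B) = A * A - B * B + A * B - B * A := by noncomm_ring
      rw [e1, e2, hAB, hBA]; abel) hDD
  refine ⟨h, hh, ?_⟩
  have hhA : h * A = B * h := by
    apply two_cancel
    calc h * A + h * A = h * (A + B) + h * (A - B) := by noncomm_ring
      _ = B * h + B * h := by rw [hhS, hhD]; noncomm_ring
  rw [mul_assoc, hhA, ← mul_assoc, hAB, one_mul]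

end indecpart

section inductionpart

theorem isUnit_restrict {K V : Type*} [DivisionRing K] [AddCommGroup V] [Module K V]
    [Module.Finite K V] (p : Submodule K V) (a : Module.End K V) (ha : IsUnit a)
    (hp : ∀ x ∈ p, a x ∈ p) : IsUnit (a.restrict hp) := by
  rw [LinearMap.isUnit_iff_ker_eq_bot] at ha ⊢
  rw [LinearMap.ker_eq_bot'] at ha ⊢
  intro x hx
  apply Subtype.ext
  exact ha x (congrArg Subtype.val hx)

theorem end_main (d : ℕ) :
    ∀ (V : Type) [AddCommGroup V] [Module (Quaternion ℝ) V] [Module.Finite (Quaternion ℝ) V]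
      (A g : Module.End (Quaternion ℝ) V), Module.finrank (Quaternion ℝ) V = d → IsUnit A →
      IsUnit g → A * g * A = g →
      ∃ h : Module.End (Quaternion ℝ) V, h * h = -1 ∧ A * h * A = h := by
  induction d using Nat.strong_induction_on with
  | _ d ih =>
  intro V _ _ _ A g hd hA hg hAg
  by_cases hE : ∀ u : Module.End (Quaternion ℝ) V, Commute u A → Commute u g →
      IsNilpotent u ∨ IsUnit u
  · let _ : Module ℝ V := Module.compHom V (algebraMap ℝ (Quaternion ℝ))
    have hsm : ∀ (r : ℝ) (x : V), r • x = (algebraMap ℝ (Quaternion ℝ) r) • x := fun _ _ => rfl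
    have : SMulCommClass (Quaternion ℝ) ℝ V := ⟨fun q r x => by
      rw [hsm, hsm, smul_smul, smul_smul, Algebra.commutes]⟩
    have : IsScalarTower ℝ (Quaternion ℝ) V := ⟨fun r q x => by
      rw [hsm, smul_smul, Algebra.smul_def]⟩
    obtain ⟨a, rfl⟩ := hA
    exact indec_case V a (↑(a⁻¹)) g a.mul_inv a.inv_mul hg hAg hE
  · push Not at hE
    obtain ⟨u, huA, hug, hun, huu⟩ := hE
    obtain ⟨k, hk⟩ := Filter.eventually_atTop.1 (LinearMap.eventually_isCompl_ker_pow_range_pow u)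
    have hc := hk (k + 1) (by omega)
    set p := LinearMap.ker (u ^ (k + 1)) with hp
    set q := LinearMap.range (u ^ (k + 1)) with hq
    have hinv : ∀ a : Module.End (Quaternion ℝ) V, Commute u a →
        (∀ x ∈ p, a x ∈ p) ∧ (∀ x ∈ q, a x ∈ q) := by
      intro a ha
      have hc' : (u ^ (k + 1)) * a = a * (u ^ (k + 1)) := (ha.pow_left _).eq
      constructor
      · intro x hx
        rw [hp, LinearMap.mem_ker] at hx ⊢
        rw [← Module.End.mul_apply, hc', Module.End.mul_apply, hx, map_zero]
      · rintro x ⟨y, rfl⟩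
        exact ⟨a y, LinearMap.congr_fun hc' y⟩
    have hpne : p ≠ ⊤ := by
      intro h
      exact hun ⟨k + 1, LinearMap.ker_eq_top.1 h⟩
    have hqne : q ≠ ⊤ := by
      intro h
      have := (LinearMap.isUnit_iff_range_eq_top _).2 h
      exact huu ((isUnit_pow_iff (by omega)).1 this)
    obtain ⟨hAp, hAq⟩ := hinv A huA
    obtain ⟨hgp, hgq⟩ := hinv g hug
    have step : ∀ (W : Submodule (Quaternion ℝ) V) (hAW : ∀ x ∈ W, A x ∈ W)
        (hgW : ∀ x ∈ W, g x ∈ W), W ≠ ⊤ →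
        ∃ h : Module.End (Quaternion ℝ) W, h * h = -1 ∧
          A.restrict hAW * h * A.restrict hAW = h := by
      intro W hAW hgW hW
      have hlt : Module.finrank (Quaternion ℝ) W < d := hd ▸ Submodule.finrank_lt hW
      refine ih _ hlt W (A.restrict hAW) (g.restrict hgW) rfl (isUnit_restrict W A hA hAW)
        (isUnit_restrict W g hg hgW) ?_
      ext x
      exact LinearMap.congr_fun hAg x
    obtain ⟨h1, h1a, h1b⟩ := step p hAp hgp hpne
    obtain ⟨h2, h2a, h2b⟩ := step q hAq hgq hqne
    let h : Module.End (Quaternion ℝ) V :=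
      LinearMap.ofIsCompl hc (p.subtype ∘ₗ h1) (q.subtype ∘ₗ h2)
    have e1 : ∀ x : p, h x = h1 x := fun x => LinearMap.ofIsCompl_apply_left hc x
    have e2 : ∀ x : q, h x = h2 x := fun x => LinearMap.ofIsCompl_apply_right hc x
    refine ⟨h, ?_, ?_⟩
    · refine end_ext_isCompl hc ?_ ?_
      · intro x hx
        rw [Module.End.mul_apply, e1 ⟨x, hx⟩, e1]
        exact congrArg Subtype.val (LinearMap.congr_fun h1a ⟨x, hx⟩)
      · intro x hx
        rw [Module.End.mul_apply, e2 ⟨x, hx⟩, e2]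
        exact congrArg Subtype.val (LinearMap.congr_fun h2a ⟨x, hx⟩)
    · refine end_ext_isCompl hc ?_ ?_
      · intro x hx
        rw [Module.End.mul_apply, Module.End.mul_apply, e1 ⟨A x, hAp x hx⟩, e1 ⟨x, hx⟩]
        exact congrArg Subtype.val (LinearMap.congr_fun h1b ⟨x, hx⟩)
      · intro x hx
        rw [Module.End.mul_apply, Module.End.mul_apply, e2 ⟨A x, hAq x hx⟩, e2 ⟨x, hx⟩]
        exact congrArg Subtype.val (LinearMap.congr_fun h2b ⟨x, hx⟩)

theorem mat_main (n : ℕ) (A g : (Matrix (Fin n) (Fin n) (Quaternion ℝ))ˣ)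
    (h : A.val * g.val * A.val = g.val) :
    ∃ k : Matrix (Fin n) (Fin n) (Quaternion ℝ), k * k = -1 ∧ A.val * k * A.val = k := by
  let L : Matrix (Fin n) (Fin n) (Quaternion ℝ) → Module.End (Quaternion ℝ) (Fin n → Quaternion ℝ) :=
    fun M => M.toLinearMapRight'
  have hmul : ∀ M N, L (M * N) = L N * L M := fun M N => Matrix.toLinearMapRight'_mul M N
  have hone : L 1 = 1 := Matrix.toLinearMapRight'_one
  have hinj : Function.Injective L := Matrix.toLinearMapRight'.injective
  have hsurj : Function.Surjective L := Matrix.toLinearMapRight'.surjective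
  have hneg : ∀ M, L (-M) = -L M := fun M => map_neg Matrix.toLinearMapRight' M
  have hu : ∀ M : (Matrix (Fin n) (Fin n) (Quaternion ℝ))ˣ, IsUnit (L M.val) := fun M =>
    ⟨⟨L M.val, L (M⁻¹).val, by rw [← hmul, M.inv_mul, hone], by rw [← hmul, M.mul_inv, hone]⟩, rfl⟩
  obtain ⟨k, hk1, hk2⟩ := end_main _ (Fin n → Quaternion ℝ) (L A.val) (L g.val) rfl (hu A) (hu g)
    (by rw [mul_assoc, ← hmul, ← hmul, h])
  obtain ⟨k, rfl⟩ := hsurj k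
  refine ⟨k, hinj ?_, hinj ?_⟩
  · rw [hmul, hk1, hneg, hone]
  · rw [hmul, hmul, ← mul_assoc, hk2]

end inductionpart

/-- An element of `SL(n, ℍ)` is reversible if and only if it is a product of two
skew-involutions in `SL(n, ℍ)`. -/
theorem reversible_SLH_iff_product_of_two_skewInvolutions (n : ℕ)
    (A : (Matrix (Fin n) (Fin n) (Quaternion ℝ))ˣ) (hA : qdet A.val = 1) :
    (∃ g : (Matrix (Fin n) (Fin n) (Quaternion ℝ))ˣ, qdet g.val = 1 ∧ g * A * g⁻¹ = A⁻¹) ↔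
      ∃ g₁ g₂ : (Matrix (Fin n) (Fin n) (Quaternion ℝ))ˣ,
        qdet g₁.val = 1 ∧ qdet g₂.val = 1 ∧
        g₁.val * g₁.val = -1 ∧ g₂.val * g₂.val = -1 ∧ A = g₁ * g₂ := by
  constructor
  · rintro ⟨g, -, hg⟩
    have h1 : A * g * A = g := by
      have : g * A = A⁻¹ * g := by rw [← hg]; group
      rw [mul_assoc, this]; group
    obtain ⟨k, hk1, hk2⟩ := mat_main n A g (by
      have := congrArg Units.val h1
      simpa using this)
    have hkk : k * (-k) = 1 := by rw [mul_neg, hk1, neg_neg]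
    have hkk' : (-k) * k = 1 := by rw [neg_mul, hk1, neg_neg]
    let K : (Matrix (Fin n) (Fin n) (Quaternion ℝ))ˣ := ⟨k, -k, hkk, hkk'⟩
    have e1 : (A * K).val * (A * K).val = -1 := by
      show (A.val * k) * (A.val * k) = -1
      rw [← mul_assoc, hk2, hk1]
    have e2 : (K⁻¹).val * (K⁻¹).val = -1 := by
      show (-k) * (-k) = -1
      rw [neg_mul_neg, hk1]
    exact ⟨A * K, K⁻¹, qdet_skew _ e1, qdet_skew _ e2, e1, e2, by group⟩
  · rintro ⟨g₁, g₂, h1, -, hs1, hs2, rfl⟩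
    refine ⟨g₁, h1, ?_⟩
    have e1 : g₁ * g₁ = -1 := Units.ext (by simpa using hs1)
    have e2 : g₂ * g₂ = -1 := Units.ext (by simpa using hs2)
    have e3 : g₁ * g₁ * (g₂ * g₂) = 1 := by rw [e1, e2]; simp
    rw [eq_inv_iff_mul_eq_one]
    calc g₁ * (g₁ * g₂) * g₁⁻¹ * (g₁ * g₂) = g₁ * g₁ * (g₂ * g₂) := by group
      _ = 1 := e3
end
end

section
/- For every λ ∈ ℂ \ {0} and n ≥ 1, the matrix Ω(λ,n) ∈ GL(n,ℂ) satisfies Ω(λ,n) · J(λ⁻¹,n) = (J(λ,n))⁻¹ · Ω(λ,n). -/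
set_option maxHeartbeats 1000000

noncomputable section

open Matrix

/-- The entries of the matrix `Ω(λ, n)` (with `1`-based indices `i, j ∈ {1, …, n}`):
`x i j = 0` for `i > j` or `j > n`; `x i n = 0` for `i ≠ n`; `x n n = 1`; and
`x i j = -λ⁻¹ • x (i+1) j - λ⁻² • x (i+1) (j+1)` for `1 ≤ i ≤ j ≤ n - 1`. -/
def omegaAux (lam : ℂ) (n : ℕ) (i j : ℕ) : ℂ :=
  if h1 : j < i ∨ n < j then 0
  else if h2 : j = n then (if i = n then 1 else 0)
  else -lam⁻¹ * omegaAux lam n (i + 1) j - (lam⁻¹) ^ 2 * omegaAux lam n (i + 1) (j + 1)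
termination_by n - i
decreasing_by all_goals omega

/-- The upper triangular matrix `Ω(λ, n)`. -/
def Omega (lam : ℂ) (n : ℕ) : Matrix (Fin n) (Fin n) ℂ :=
  Matrix.of fun i j => omegaAux lam n ((i : ℕ) + 1) ((j : ℕ) + 1)

theorem omegaAux_zero (lam : ℂ) (n i j : ℕ) (h : j < i ∨ n < j) : omegaAux lam n i j = 0 := by
  rw [omegaAux]; simp [h]

theorem omegaAux_rec (lam : ℂ) (n i j : ℕ) (h : j < n) :
    omegaAux lam n i j =
      -lam⁻¹ * omegaAux lam n (i + 1) j - (lam⁻¹) ^ 2 * omegaAux lam n (i + 1) (j + 1) := by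
  by_cases hji : j < i
  · rw [omegaAux_zero _ _ _ _ (Or.inl hji), omegaAux_zero _ _ _ _ (Or.inl (by omega)),
      omegaAux_zero _ _ _ _ (Or.inl (by omega))]
    ring
  · rw [omegaAux, dif_neg (by omega), dif_neg (by omega)]

theorem sum_jordan_col (g : ℕ → ℂ) (hg : g 0 = 0) (b : ℂ) (n j : ℕ) (hj : j < n) :
    ∑ k : Fin n, g ((k : ℕ) + 1) * (if j = (k : ℕ) then b else if j = (k : ℕ) + 1 then 1 else 0)
      = g (j + 1) * b + g j := by
  rw [Fin.sum_univ_eq_sum_range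
    (fun k => g (k + 1) * (if j = k then b else if j = k + 1 then 1 else 0)) n]
  have h1 : ∀ k ∈ Finset.range n,
      g (k + 1) * (if j = k then b else if j = k + 1 then 1 else 0)
      = (if j = k then g (k + 1) * b else 0) + (if j = k + 1 then g (k + 1) else 0) := by
    intro k _
    split_ifs <;> first | omega | simp
  rw [Finset.sum_congr rfl h1, Finset.sum_add_distrib, Finset.sum_ite_eq,
    if_pos (Finset.mem_range.2 hj)]
  congr 1
  cases j with
  | zero => simp [hg]
  | succ m =>
    simp only [Nat.add_right_cancel_iff]
    rw [Finset.sum_ite_eq, if_pos (Finset.mem_range.2 (by omega))]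

theorem sum_jordan_row (g : ℕ → ℂ) (b : ℂ) (n i : ℕ) (hi : i < n) (hg : g n = 0) :
    ∑ k : Fin n, (if (k : ℕ) = i then b else if (k : ℕ) = i + 1 then 1 else 0) * g (k : ℕ)
      = b * g i + g (i + 1) := by
  rw [Fin.sum_univ_eq_sum_range
    (fun k => (if k = i then b else if k = i + 1 then 1 else 0) * g k) n]
  have h1 : ∀ k ∈ Finset.range n,
      (if k = i then b else if k = i + 1 then 1 else 0) * g k
      = (if k = i then b * g k else 0) + (if k = i + 1 then g k else 0) := by
    intro k _
    split_ifs <;> first | omega | simp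
  rw [Finset.sum_congr rfl h1, Finset.sum_add_distrib, Finset.sum_ite_eq',
    if_pos (Finset.mem_range.2 hi), Finset.sum_ite_eq']
  congr 1
  split_ifs with h
  · rfl
  · rw [Finset.mem_range] at h
    rw [show i + 1 = n by omega, hg]

theorem Omega_jordan_entry (lam b : ℂ) (n : ℕ) (i j : Fin n) :
    (Omega lam n * jordanC b n) i j
      = omegaAux lam n (i + 1) (j + 1) * b + omegaAux lam n (i + 1) j := by
  rw [Matrix.mul_apply]
  exact sum_jordan_col (omegaAux lam n (i + 1)) (omegaAux_zero _ _ _ _ (Or.inl (by omega))) b n j j.2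

theorem jordan_Omega_jordan (lam : ℂ) (hlam : lam ≠ 0) (n : ℕ) :
    jordanC lam n * (Omega lam n * jordanC lam⁻¹ n) = Omega lam n := by
  ext i j
  have hj := j.2
  rw [Matrix.mul_apply]
  simp only [Omega_jordan_entry]
  have := sum_jordan_row (fun k => omegaAux lam n (k + 1) (j + 1) * lam⁻¹
    + omegaAux lam n (k + 1) j) lam n i i.2 (by
      rw [omegaAux_zero _ _ _ _ (Or.inl (by omega)), omegaAux_zero _ _ _ _ (Or.inl (by omega))]
      ring)
  refine Eq.trans this ?_
  simp only [Omega, Matrix.of_apply]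
  rw [omegaAux_rec lam n (i + 1) j hj]
  field_simp
  ring

theorem jordanC_det (lam : ℂ) (n : ℕ) : (jordanC lam n).det = lam ^ n := by
  rw [Matrix.det_of_upperTriangular]
  · simp [jordanC]
  · intro i j h
    have h' : (j : ℕ) < i := h
    simp only [jordanC, Matrix.of_apply]
    rw [if_neg (by omega), if_neg (by omega)]

/-- `Ω(λ, n) · J(λ⁻¹, n) = (J(λ, n))⁻¹ · Ω(λ, n)` for every `λ ∈ ℂ \\ {0}` and `n ≥ 1`. -/
theorem Omega_mul_jordan_inv (lam : ℂ) (hlam : lam ≠ 0) (n : ℕ) (hn : 1 ≤ n) :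
    Omega lam n * jordanC lam⁻¹ n = (jordanC lam n)⁻¹ * Omega lam n := by
  have hdet : IsUnit (jordanC lam n).det := by
    rw [jordanC_det]
    exact (isUnit_iff_ne_zero.2 hlam).pow n
  conv_rhs => rw [← jordan_Omega_jordan lam hlam n]
  rw [Matrix.nonsing_inv_mul_cancel_left _ _ hdet]
end
end

section
/- For every λ ∈ ℂ \ {0} and n ≥ 1, the matrix Ω(λ,n) ∈ GL(n,ℂ) is invertible with inverse (Ω(λ,n))⁻¹ = Ω(λ⁻¹,n). -/
set_option maxHeartbeats 1000000

noncomputable section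

open Matrix

/-- Closed form of the entries, indices counted from the bottom right corner. -/
def omY (a : ℂ) : ℕ → ℕ → ℂ
  | 0, 0 => 1
  | 0, _ + 1 => 0
  | _ + 1, 0 => 0
  | k + 1, l + 1 => (-1) ^ (k + 1) * a ^ (k + l + 2) * (k.choose l : ℂ)

lemma altsum_choose (k : ℕ) : ∀ (m N : ℕ), k < N →
    ∑ l ∈ Finset.range N, (-1 : ℂ) ^ l * (k.choose l : ℂ) * (l.choose m : ℂ)
      = if k = m then (-1) ^ k else 0 := by
  induction k with
  | zero =>
    intro m N hN
    obtain ⟨N, rfl⟩ : ∃ M, N = M + 1 := ⟨N - 1, by omega⟩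
    rw [Finset.sum_range_succ']
    cases m <;> simp
  | succ k ih =>
    intro m N hN
    obtain ⟨N, rfl⟩ : ∃ M, N = M + 1 := ⟨N - 1, by omega⟩
    have h1 := ih m (N + 1) (by omega)
    rw [Finset.sum_range_succ'] at h1 ⊢
    have key : ∑ l ∈ Finset.range N,
        (-1 : ℂ) ^ (l + 1) * ((k + 1).choose (l + 1) : ℂ) * ((l + 1).choose m : ℂ)
        = ∑ l ∈ Finset.range N, (-1 : ℂ) ^ (l + 1) * (k.choose (l + 1) : ℂ) * ((l + 1).choose m : ℂ)
        - ∑ l ∈ Finset.range N, (-1 : ℂ) ^ l * (k.choose l : ℂ) * ((l + 1).choose m : ℂ) := by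
      rw [← Finset.sum_sub_distrib]
      refine Finset.sum_congr rfl fun l _ => ?_
      rw [Nat.choose_succ_succ k l]
      push_cast
      ring
    rw [key]
    cases m with
    | zero =>
      have h2 := ih 0 N (by omega)
      simp only [Nat.choose_zero_right] at h1 h2 ⊢
      rw [h2]
      simp only [Nat.add_eq_zero_iff, one_ne_zero, and_false, if_false]
      linear_combination h1
    | succ m =>
      have h2 := ih m N (by omega)
      have h3 : ∑ l ∈ Finset.range N,
          (-1 : ℂ) ^ l * (k.choose l : ℂ) * ((l + 1).choose (m + 1) : ℂ)
          = (if k = m then (-1) ^ k else 0) + (if k = m + 1 then (-1) ^ k else 0) := by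
        rw [← h2, ← ih (m + 1) N (by omega), ← Finset.sum_add_distrib]
        refine Finset.sum_congr rfl fun l _ => ?_
        rw [Nat.choose_succ_succ l m]
        push_cast
        ring
      rw [h3]
      simp only [Nat.choose_zero_right, Nat.add_right_cancel_iff] at h1 ⊢
      by_cases hk : k = m
      · simp only [hk, if_true] at h1 ⊢
        linear_combination h1
      · simp only [hk, if_false] at h1 ⊢
        linear_combination h1

lemma omY_orth (a b : ℂ) (hab : a * b = 1) (k m N : ℕ) (hk : k < N) :
    ∑ l ∈ Finset.range N, omY a k l * omY b l m = if k = m then 1 else 0 := by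
  obtain ⟨N, rfl⟩ : ∃ M, N = M + 1 := ⟨N - 1, by omega⟩
  rw [Finset.sum_range_succ']
  rcases k with _ | k <;> rcases m with _ | m
  · simp [omY]
  · simp [omY]
  · simp [omY]
  · have h := altsum_choose k m N (by omega)
    have e : ∀ l, omY a (k + 1) (l + 1) * omY b (l + 1) (m + 1)
        = (-1) ^ k * a ^ k * b ^ m *
          ((-1 : ℂ) ^ l * (k.choose l : ℂ) * (l.choose m : ℂ)) := by
      intro l
      have h2 : a ^ (l + 2) * b ^ (l + 2) = 1 := by rw [← mul_pow, hab, one_pow]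
      simp only [omY]
      linear_combination ((-1) ^ k * a ^ k * b ^ m *
          ((-1 : ℂ) ^ l * (k.choose l : ℂ) * (l.choose m : ℂ))) * h2
    simp only [e]
    rw [← Finset.mul_sum, h]
    by_cases hkm : k = m
    · subst hkm
      have h2 : a ^ k * b ^ k = 1 := by rw [← mul_pow, hab, one_pow]
      have h3 : (-1 : ℂ) ^ k * (-1) ^ k = 1 := by rw [← mul_pow]; simp
      simp only [omY, if_true]
      linear_combination h2 * ((-1 : ℂ) ^ k * (-1) ^ k) + h3
    · simp [omY, hkm]

lemma omegaAux_eq (lam : ℂ) (n k : ℕ) : ∀ l, k < n → l < n →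
    omegaAux lam n (n - k) (n - l) = omY lam⁻¹ k l := by
  induction k with
  | zero =>
    intro l hk hl
    rw [omegaAux]
    rcases l with _ | l
    · simp [omY]
    · rw [dif_pos (by omega)]; simp [omY]
  | succ k ih =>
    intro l hk hl
    rw [omegaAux]
    rcases l with _ | l
    · rw [dif_neg (by omega), dif_pos (by omega), if_neg (by omega)]
      simp [omY]
    · by_cases hkl : k < l
      · rw [dif_pos (by omega)]
        simp [omY, Nat.choose_eq_zero_of_lt hkl]
      · rw [dif_neg (by omega), dif_neg (by omega)]
        have e1 : n - (k + 1) + 1 = n - k := by omega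
        have e2 : n - (l + 1) + 1 = n - l := by omega
        rw [e1, e2, ih _ (by omega) hl, ih _ (by omega) (by omega)]
        rcases k with _ | k
        · obtain rfl : l = 0 := by omega
          simp [omY]
        · rcases l with _ | l
          · simp [omY]
            ring
          · simp only [omY]
            rw [Nat.choose_succ_succ k l]
            push_cast
            ring

/-- `Ω(λ, n)` is invertible, with inverse `Ω(λ⁻¹, n)`. -/
theorem Omega_isUnit_and_inv_eq (lam : ℂ) (hlam : lam ≠ 0) (n : ℕ) (hn : 1 ≤ n) :
    IsUnit (Omega lam n) ∧ (Omega lam n)⁻¹ = Omega lam⁻¹ n := by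
  have hmul : Omega lam n * Omega lam⁻¹ n = 1 := by
    ext i j
    rw [Matrix.mul_apply, Matrix.one_apply]
    have hi := i.isLt
    have hj := j.isLt
    have ent : ∀ (mu : ℂ) (x y : Fin n),
        Omega mu n x y = omY mu⁻¹ (n - 1 - (x : ℕ)) (n - 1 - (y : ℕ)) := by
      intro mu x y
      have hx := x.isLt
      have hy := y.isLt
      rw [← omegaAux_eq mu n _ _ (by omega) (by omega)]
      simp only [Omega, Matrix.of_apply]
      congr 1 <;> omega
    simp only [ent]
    rw [Fin.sum_univ_eq_sum_range (fun x => omY lam⁻¹ (n - 1 - (i : ℕ)) (n - 1 - x) *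
      omY lam⁻¹⁻¹ (n - 1 - x) (n - 1 - (j : ℕ))) n,
      Finset.sum_range_reflect (fun x => omY lam⁻¹ (n - 1 - (i : ℕ)) x *
      omY lam⁻¹⁻¹ x (n - 1 - (j : ℕ))) n,
      omY_orth _ _ (mul_inv_cancel₀ (inv_ne_zero hlam)) _ _ _ (by omega)]
    have : (n - 1 - (i : ℕ) = n - 1 - (j : ℕ)) ↔ i = j := by
      rw [Fin.ext_iff]; omega
    simp only [this]
  exact ⟨IsUnit.of_mul_eq_one _ hmul, Matrix.inv_eq_right_inv hmul⟩
end
end
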